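/- arXiv:2502.06051 — 13 statements merged into one kernel-verified Lean document; each statement's English description precedes it below -/
import Mathlib

section
/- In the finite KL-regularized contextual bandit setup with reward r : S×A → ℝ, let g : S×A → ℝ be arbitrary and for γ ∈ [0,1] set g_γ = γ·g + (1−γ)·r and π_γ = π_{g_γ} (the Gibbs policy of g_γ). Then there exists γ ∈ [0,1] such that J(π_r) − J(π_g) ≤ η·Σ_{s∈S} ρ(s)·Σ_{a∈A} π_γ(a|s)·(r(s,a) − g(s,a))². -/
/-- The Gibbs policy of `g` relative to the reference policy `πref` with inverse
temperature `η`. -/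
noncomputable def gibbs {S A : Type*} [Fintype A] (πref : S → A → ℝ) (η : ℝ)
    (g : S → A → ℝ) : S → A → ℝ :=
  fun s a => πref s a * Real.exp (η * g s a) / ∑ a', πref s a' * Real.exp (η * g s a')

/-- The KL-regularized objective of a policy `π` with reward `r`. -/
noncomputable def Jkl {S A : Type*} [Fintype S] [Fintype A] (ρ : S → ℝ)
    (πref : S → A → ℝ) (η : ℝ) (r : S → A → ℝ) (π : S → A → ℝ) : ℝ :=
  ∑ s, ρ s * ∑ a, π s a * (r s a - η⁻¹ * Real.log (π s a / πref s a))

noncomputable def auxM {S A : Type*} [Fintype A] (πref : S → A → ℝ) (η : ℝ)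
    (r g : S → A → ℝ) (k : ℕ) (s : S) (γ : ℝ) : ℝ :=
  ∑ a, πref s a * Real.exp (η * (γ * g s a + (1 - γ) * r s a)) * (r s a - g s a) ^ k

lemma auxM_deriv {S A : Type*} [Fintype A] (πref : S → A → ℝ) (η : ℝ)
    (r g : S → A → ℝ) (k : ℕ) (s : S) (γ : ℝ) :
    HasDerivAt (auxM πref η r g k s) (-η * auxM πref η r g (k+1) s γ) γ := by
  unfold auxM
  rw [Finset.mul_sum]
  refine HasDerivAt.fun_sum fun a _ => ?_
  have h1 : HasDerivAt (fun γ : ℝ => η * (γ * g s a + (1 - γ) * r s a))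
      (η * (1 * g s a + (-1) * r s a)) γ :=
    (((hasDerivAt_id γ).mul_const _).add
      (((hasDerivAt_id γ).const_sub 1).mul_const _)).const_mul η
  have h2 := (h1.exp.const_mul (πref s a)).mul_const ((r s a - g s a) ^ k)
  refine h2.congr_deriv ?_
  ring

lemma auxM_pos {S A : Type*} [Fintype A] [Nonempty A] (πref : S → A → ℝ)
    (hpos : ∀ s a, 0 < πref s a) (η : ℝ)
    (r g : S → A → ℝ) (s : S) (γ : ℝ) : 0 < auxM πref η r g 0 s γ := by
  unfold auxM
  refine Finset.sum_pos (fun a _ => ?_) Finset.univ_nonempty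
  have := hpos s a
  positivity

lemma gibbs_sum {S A : Type*} [Fintype A] (πref : S → A → ℝ) (η : ℝ)
    (r g : S → A → ℝ) (k : ℕ) (s : S) (γ : ℝ) :
    ∑ a, gibbs πref η (fun s' a' => γ * g s' a' + (1 - γ) * r s' a') s a * (r s a - g s a) ^ k
      = auxM πref η r g k s γ / auxM πref η r g 0 s γ := by
  simp only [gibbs, auxM, pow_zero, mul_one]
  rw [Finset.sum_div]
  exact Finset.sum_congr rfl fun a _ => by ring

lemma Jkl_gibbs {S A : Type*} [Fintype S] [Fintype A] [Nonempty A] (ρ : S → ℝ)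
    (πref : S → A → ℝ) (hpos : ∀ s a, 0 < πref s a)
    (η : ℝ) (hη : 0 < η) (r g : S → A → ℝ) (γ : ℝ) :
    Jkl ρ πref η r (gibbs πref η (fun s' a' => γ * g s' a' + (1 - γ) * r s' a')) =
      ∑ s, ρ s * (η⁻¹ * Real.log (auxM πref η r g 0 s γ)
        + γ * (auxM πref η r g 1 s γ / auxM πref η r g 0 s γ)) := by
  unfold Jkl
  refine Finset.sum_congr rfl fun s _ => ?_
  congr 1
  have hZ := auxM_pos πref hpos η r g s γ
  have h0 := gibbs_sum πref η r g 0 s γ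
  have h1 := gibbs_sum πref η r g 1 s γ
  rw [div_self hZ.ne'] at h0
  simp only [pow_zero, mul_one] at h0
  have h2 : η⁻¹ * Real.log (auxM πref η r g 0 s γ) = η⁻¹ * Real.log (auxM πref η r g 0 s γ) *
      ∑ a, gibbs πref η (fun s' a' => γ * g s' a' + (1 - γ) * r s' a') s a := by
    rw [h0, mul_one]
  rw [← h1, h2, Finset.mul_sum, Finset.mul_sum, ← Finset.sum_add_distrib]
  refine Finset.sum_congr rfl fun a _ => ?_
  have hl : Real.log (gibbs πref η (fun s' a' => γ * g s' a' + (1 - γ) * r s' a') s a / πref s a)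
      = η * (γ * g s a + (1 - γ) * r s a) - Real.log (auxM πref η r g 0 s γ) := by
    have : gibbs πref η (fun s' a' => γ * g s' a' + (1 - γ) * r s' a') s a / πref s a
        = Real.exp (η * (γ * g s a + (1 - γ) * r s a)) / auxM πref η r g 0 s γ := by
      have h := (hpos s a).ne'
      simp only [gibbs, auxM, pow_zero, mul_one]
      field_simp
    rw [this, Real.log_div (Real.exp_pos _).ne' hZ.ne', Real.log_exp]
  rw [hl]
  field_simp
  ring

/-- Mean-value-type suboptimality bound: there exists `γ ∈ [0,1]` such that
`J(π_r) − J(π_g) ≤ η · E_{ρ × π_γ}[(r − g)²]` where `π_γ` is the Gibbs policy of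
`γ·g + (1−γ)·r`. -/
theorem stmt3 {S A : Type*} [Fintype S] [Fintype A] [Nonempty S] [Nonempty A]
    (ρ : S → ℝ) (hρ0 : ∀ s, 0 ≤ ρ s) (hρ1 : ∑ s, ρ s = 1)
    (πref : S → A → ℝ) (hpos : ∀ s a, 0 < πref s a) (hsum : ∀ s, ∑ a, πref s a = 1)
    (η : ℝ) (hη : 0 < η) (r g : S → A → ℝ) :
    ∃ γ ∈ Set.Icc (0 : ℝ) 1,
      Jkl ρ πref η r (gibbs πref η r) - Jkl ρ πref η r (gibbs πref η g) ≤
        η * ∑ s, ρ s * ∑ a,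
          gibbs πref η (fun s' a' => γ * g s' a' + (1 - γ) * r s' a') s a
            * (r s a - g s a) ^ 2 := by
  have hd : ∀ γ : ℝ, HasDerivAt (fun γ => ∑ s, ρ s * (η⁻¹ * Real.log (auxM πref η r g 0 s γ)
        + γ * (auxM πref η r g 1 s γ / auxM πref η r g 0 s γ)))
      (∑ s, ρ s * (-(γ * η * (auxM πref η r g 2 s γ / auxM πref η r g 0 s γ
        - (auxM πref η r g 1 s γ / auxM πref η r g 0 s γ) ^ 2)))) γ := by
    intro γ
    refine HasDerivAt.fun_sum fun s _ => ?_
    have hZ := (auxM_pos πref hpos η r g s γ).ne'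
    have d0 := auxM_deriv πref η r g 0 s γ
    have d1 := auxM_deriv πref η r g 1 s γ
    have := (((d0.log hZ).const_mul η⁻¹).add
      ((hasDerivAt_id γ).mul (d1.div d0 hZ))).const_mul (ρ s)
    refine this.congr_deriv ?_
    simp only [id, Pi.div_apply, zero_add, Nat.reduceAdd]
    field_simp
    ring
  obtain ⟨γ, hγ, h⟩ := exists_hasDerivAt_eq_slope _ _ (zero_lt_one (α := ℝ))
    (fun x _ => (hd x).continuousAt.continuousWithinAt) (fun x _ => hd x)
  refine ⟨γ, ⟨hγ.1.le, hγ.2.le⟩, ?_⟩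
  have e0 := Jkl_gibbs ρ πref hpos η hη r g 0
  have e1 := Jkl_gibbs ρ πref hpos η hη r g 1
  rw [← e0, ← e1] at h
  simp only [zero_mul, one_mul, sub_zero, zero_add, sub_self, add_zero, div_one] at h
  have h' : Jkl ρ πref η r (gibbs πref η r) - Jkl ρ πref η r (gibbs πref η g) =
      ∑ s, ρ s * (γ * η * (auxM πref η r g 2 s γ / auxM πref η r g 0 s γ
        - (auxM πref η r g 1 s γ / auxM πref η r g 0 s γ) ^ 2)) := by
    rw [← neg_sub, ← h, ← Finset.sum_neg_distrib]
    exact Finset.sum_congr rfl fun s _ => by ring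
  rw [h', Finset.mul_sum]
  refine Finset.sum_le_sum fun s _ => ?_
  rw [gibbs_sum]
  have hZ := auxM_pos πref hpos η r g s γ
  have hQ : 0 ≤ auxM πref η r g 2 s γ / auxM πref η r g 0 s γ := by
    refine div_nonneg (Finset.sum_nonneg fun a _ => ?_) hZ.le
    have := hpos s a
    positivity
  rw [mul_left_comm η]
  refine mul_le_mul_of_nonneg_left ?_ (hρ0 s)
  rw [mul_comm γ η, mul_assoc]
  refine mul_le_mul_of_nonneg_left ?_ hη.le
  nlinarith [mul_nonneg hγ.1.le (sq_nonneg (auxM πref η r g 1 s γ / auxM πref η r g 0 s γ)),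
    mul_nonneg (sub_nonneg.2 hγ.2.le) hQ]
end

section
/- In the finite KL-regularized contextual bandit setup, let r : S×A → ℝ and Δ : S×A → ℝ with Δ(s,a) ≤ 0 for all (s,a). For γ ∈ [0,1] define the tilted Gibbs policy π_γ(a|s) = π_ref(a|s)·exp(η·(r(s,a) + γ·Δ(s,a))) / Σ_{a'} π_ref(a'|s)·exp(η·(r(s,a') + γ·Δ(s,a'))), and set G(γ) = Σ_{s∈S} ρ(s)·Σ_{a∈A} π_γ(a|s)·Δ(s,a)². Then G(γ) ≤ G(0) for every γ ∈ [0,1]; that is, 0 is a maximizer of G on [0,1]. -/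
theorem cheb_aux {A : Type*} [Fintype A] (w t x : A → ℝ) (hw : ∀ a, 0 < w a)
    (h : ∀ a b, (t a - t b) * (x a - x b) ≤ 0) :
    (∑ a, w a * t a * x a) * (∑ a, w a) ≤ (∑ a, w a * x a) * (∑ a, w a * t a) := by
  have h1 : ∑ a, ∑ b, w a * w b * ((t a - t b) * (x a - x b)) ≤ 0 :=
    Finset.sum_nonpos fun a _ => Finset.sum_nonpos fun b _ =>
      mul_nonpos_of_nonneg_of_nonpos (mul_pos (hw a) (hw b)).le (h a b)
  have h2 : ∑ a, ∑ b, w a * w b * ((t a - t b) * (x a - x b)) =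
      (∑ a, w a * t a * x a) * (∑ a, w a) - (∑ a, w a * x a) * (∑ a, w a * t a)
      - (∑ a, w a * t a) * (∑ a, w a * x a) + (∑ a, w a) * (∑ a, w a * t a * x a) := by
    simp only [Finset.sum_mul_sum, ← Finset.sum_sub_distrib, ← Finset.sum_add_distrib]
    refine Finset.sum_congr rfl fun a _ => Finset.sum_congr rfl fun b _ => ?_
    ring
  nlinarith

/-- Monotonicity of `G`: for a nonpositive perturbation `Δ`, the function
`G(γ) = E_{ρ × π_γ}[Δ²]` with `π_γ` the Gibbs policy of `r + γ·Δ` is maximized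
at `γ = 0` over `[0,1]`. -/
theorem stmt4 {S A : Type*} [Fintype S] [Fintype A] [Nonempty S] [Nonempty A]
    (ρ : S → ℝ) (hρ0 : ∀ s, 0 ≤ ρ s) (hρ1 : ∑ s, ρ s = 1)
    (πref : S → A → ℝ) (hpos : ∀ s a, 0 < πref s a) (hsum : ∀ s, ∑ a, πref s a = 1)
    (η : ℝ) (hη : 0 < η) (r Δ : S → A → ℝ) (hΔ : ∀ s a, Δ s a ≤ 0)
    (G : ℝ → ℝ)
    (hG : ∀ γ, G γ = ∑ s, ρ s * ∑ a,
      gibbs πref η (fun s' a' => r s' a' + γ * Δ s' a') s a * (Δ s a) ^ 2) :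
    ∀ γ ∈ Set.Icc (0 : ℝ) 1, G γ ≤ G 0 := by
  intro γ hγ
  rw [hG, hG]
  refine Finset.sum_le_sum fun s _ => mul_le_mul_of_nonneg_left ?_ (hρ0 s)
  have hw : ∀ a, 0 < πref s a * Real.exp (η * r s a) :=
    fun a => mul_pos (hpos s a) (Real.exp_pos _)
  have hc := cheb_aux (fun a => πref s a * Real.exp (η * r s a))
    (fun a => Real.exp (η * γ * Δ s a)) (fun a => (Δ s a) ^ 2) hw (by
      intro a b
      have hk : 0 ≤ η * γ := mul_nonneg hη.le hγ.1
      have ha := hΔ s a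
      have hb := hΔ s b
      rcases le_total (Δ s a) (Δ s b) with h | h
      · have h1 := Real.exp_le_exp.2 (mul_le_mul_of_nonneg_left h hk)
        exact mul_nonpos_of_nonpos_of_nonneg (by linarith) (by nlinarith)
      · have h1 := Real.exp_le_exp.2 (mul_le_mul_of_nonneg_left h hk)
        exact mul_nonpos_of_nonneg_of_nonpos (by linarith) (by nlinarith))
  have e : ∀ a, πref s a * Real.exp (η * (r s a + γ * Δ s a)) =
      πref s a * Real.exp (η * r s a) * Real.exp (η * γ * Δ s a) := by
    intro a
    rw [mul_assoc, ← Real.exp_add]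
    ring_nf
  simp only [gibbs, e, zero_mul, add_zero, div_mul_eq_mul_div, ← Finset.sum_div, Real.exp_zero,
    mul_zero, mul_one]
  rw [div_le_div_iff₀ (Finset.sum_pos (fun a _ => mul_pos (hw a) (Real.exp_pos _))
    Finset.univ_nonempty) (Finset.sum_pos (fun a _ => hw a) Finset.univ_nonempty)]
  exact hc
end

section
/- In the finite KL-regularized contextual bandit setup with reward r : S×A → ℝ, let g : S×A → ℝ be a pessimistic estimator, i.e., g(s,a) ≤ r(s,a) for all (s,a). Let π* = π_r and π_g be the Gibbs policies of r and g respectively. Then J(π*) − J(π_g) ≤ η·Σ_{s∈S} ρ(s)·Σ_{a∈A} π*(a|s)·(r(s,a) − g(s,a))²; in particular the suboptimality of the pessimistic Gibbs policy is controlled by the squared estimation error under the distribution of the optimal policy π*. -/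
theorem aux_gap {A : Type*} [Fintype A] [Nonempty A]
    (m : A → ℝ) (hpos : ∀ a, 0 < m a)
    (η : ℝ) (hη : 0 < η) (r g : A → ℝ) (W V : ℝ)
    (hW : W = ∑ a, m a * Real.exp (η * r a)) (hV : V = ∑ a, m a * Real.exp (η * g a))
    (hpess : ∀ a, g a ≤ r a) :
    (∑ a, m a * Real.exp (η * r a) / W *
        (r a - η⁻¹ * Real.log (m a * Real.exp (η * r a) / W / m a))) -
      (∑ a, m a * Real.exp (η * g a) / V *
        (r a - η⁻¹ * Real.log (m a * Real.exp (η * g a) / V / m a))) ≤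
      η * ∑ a, m a * Real.exp (η * r a) / W * (r a - g a) ^ 2 := by
  have hW0 : 0 < W := by
    rw [hW]
    exact Finset.sum_pos (fun a _ => mul_pos (hpos a) (Real.exp_pos _)) Finset.univ_nonempty
  have hV0 : 0 < V := by
    rw [hV]
    exact Finset.sum_pos (fun a _ => mul_pos (hpos a) (Real.exp_pos _)) Finset.univ_nonempty
  have hVW : V ≤ W := by
    rw [hW, hV]
    refine Finset.sum_le_sum fun a _ => ?_
    have := hpos a
    have := hpess a
    gcongr
  have hlog : ∀ (h : A → ℝ) (Z : ℝ), 0 < Z → ∀ a,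
      Real.log (m a * Real.exp (η * h a) / Z / m a) = η * h a - Real.log Z := by
    intro h Z hZ a
    have h1 : m a * Real.exp (η * h a) / Z / m a = Real.exp (η * h a) / Z := by
      have := (hpos a).ne'
      field_simp
    rw [h1, Real.log_div (Real.exp_pos _).ne' hZ.ne', Real.log_exp]
  simp only [hlog r W hW0, hlog g V hV0]
  set p : A → ℝ := fun a => m a * Real.exp (η * r a) / W with hp
  set q : A → ℝ := fun a => m a * Real.exp (η * g a) / V with hq
  have hp0 : ∀ a, 0 ≤ p a := fun a => by have := hpos a; positivity
  have hp1 : ∑ a, p a = 1 := by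
    rw [hp, ← Finset.sum_div, ← hW, div_self hW0.ne']
  have hq1 : ∑ a, q a = 1 := by
    rw [hq, ← Finset.sum_div, ← hV, div_self hV0.ne']
  have e1 : ∑ a, p a * (r a - η⁻¹ * (η * r a - Real.log W)) = η⁻¹ * Real.log W := by
    rw [← one_mul (η⁻¹ * Real.log W), ← hp1, Finset.sum_mul]
    refine Finset.sum_congr rfl fun a _ => ?_
    field_simp
    ring
  have e2 : ∑ a, q a * (r a - η⁻¹ * (η * g a - Real.log V)) =
      ∑ a, q a * (r a - g a) + η⁻¹ * Real.log V := by
    rw [← one_mul (η⁻¹ * Real.log V), ← hq1, Finset.sum_mul, ← Finset.sum_add_distrib]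
    refine Finset.sum_congr rfl fun a _ => ?_
    field_simp
    ring
  have hpe : ∀ a, p a * Real.exp (-(η * (r a - g a))) = m a * Real.exp (η * g a) / W := by
    intro a
    have : Real.exp (η * g a) = Real.exp (η * r a) * Real.exp (-(η * (r a - g a))) := by
      rw [← Real.exp_add]; congr 1; ring
    rw [this, hp]; ring
  have hZ : ∑ a, p a * Real.exp (-(η * (r a - g a))) = V / W := by
    simp only [hpe]
    rw [← Finset.sum_div, ← hV]
  set D := ∑ a, p a * (r a - g a) with hD
  have hJ : 1 ≤ V / W * Real.exp (η * D) := by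
    rw [← hZ, Finset.sum_mul]
    have : (1 : ℝ) = ∑ a, p a * (-(η * (r a - g a)) + η * D + 1) := by
      have h : ∀ a, p a * (-(η * (r a - g a)) + η * D + 1) =
          -η * (p a * (r a - g a)) + p a * (η * D + 1) := fun a => by ring
      simp only [h]
      rw [Finset.sum_add_distrib, ← Finset.mul_sum, ← Finset.sum_mul, hp1, ← hD]
      ring
    rw [this]
    refine Finset.sum_le_sum fun a _ => ?_
    rw [mul_assoc, ← Real.exp_add]
    exact mul_le_mul_of_nonneg_left (Real.add_one_le_exp _) (hp0 a)
  have hJ' : Real.log W - Real.log V ≤ η * D := by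
    have h := Real.log_nonneg hJ
    rw [Real.log_mul (div_pos hV0 hW0).ne' (Real.exp_pos _).ne',
      Real.log_div hV0.ne' hW0.ne', Real.log_exp] at h
    linarith
  have hJ'' : η⁻¹ * (Real.log W - Real.log V) ≤ D := by
    rw [inv_mul_le_iff₀ hη]; exact hJ'
  have hQ : D - η * ∑ a, p a * (r a - g a) ^ 2 ≤ ∑ a, q a * (r a - g a) := by
    rw [hD, Finset.mul_sum, ← Finset.sum_sub_distrib]
    refine Finset.sum_le_sum fun a _ => ?_
    have hd : 0 ≤ r a - g a := sub_nonneg.2 (hpess a)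
    have h1 : p a * (1 - η * (r a - g a)) ≤ q a := by
      calc p a * (1 - η * (r a - g a)) ≤ p a * Real.exp (-(η * (r a - g a))) := by
            refine mul_le_mul_of_nonneg_left ?_ (hp0 a)
            have := Real.add_one_le_exp (-(η * (r a - g a)))
            linarith
        _ = m a * Real.exp (η * g a) / W := hpe a
        _ ≤ q a := by
            have := hpos a
            exact div_le_div_of_nonneg_left (by positivity) hV0 hVW
    calc _ = p a * (1 - η * (r a - g a)) * (r a - g a) := by ring
      _ ≤ _ := mul_le_mul_of_nonneg_right h1 hd
  have e1' := e1
  have e2' := e2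
  simp only [hp, hq] at e1' e2' hQ ⊢
  rw [e1', e2']
  linarith

/-- Pessimism bound: if `g ≤ r` pointwise, then the suboptimality of the Gibbs
policy of `g` is bounded by `η` times the squared estimation error under the
distribution of the optimal policy `π* = π_r`. -/
theorem stmt6 {S A : Type*} [Fintype S] [Fintype A] [Nonempty S] [Nonempty A]
    (ρ : S → ℝ) (hρ0 : ∀ s, 0 ≤ ρ s) (hρ1 : ∑ s, ρ s = 1)
    (πref : S → A → ℝ) (hpos : ∀ s a, 0 < πref s a) (hsum : ∀ s, ∑ a, πref s a = 1)
    (η : ℝ) (hη : 0 < η) (r g : S → A → ℝ) (hpess : ∀ s a, g s a ≤ r s a) :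
    Jkl ρ πref η r (gibbs πref η r) - Jkl ρ πref η r (gibbs πref η g) ≤
      η * ∑ s, ρ s * ∑ a, gibbs πref η r s a * (r s a - g s a) ^ 2 := by
  unfold Jkl
  rw [← Finset.sum_sub_distrib, Finset.mul_sum]
  refine Finset.sum_le_sum fun s _ => ?_
  have h := aux_gap (πref s) (hpos s) η hη (r s) (g s) _ _ rfl rfl (hpess s)
  have h2 := mul_le_mul_of_nonneg_left h (hρ0 s)
  simp only [gibbs]
  linarith
end

section
/- Let A be a nonempty finite set, q a probability mass function on A with q(a) > 0 for all a, α > 0, and f : ℝ → ℝ differentiable on [0,∞) and α-strongly convex on [0,∞), in the sense that f(x) ≥ f(y) + f'(y)·(x−y) + (α/2)·(x−y)² for all x, y ≥ 0. Then for all probability mass functions π₁, π₂ on A: Σ_{a∈A} q(a)·f(π₁(a)/q(a)) − Σ_{a∈A} q(a)·f(π₂(a)/q(a)) − Σ_{a∈A} (π₁(a) − π₂(a))·f'(π₂(a)/q(a)) ≥ (α/2)·(Σ_{a∈A} |π₁(a) − π₂(a)|)². In particular, since Σ_a |π₁(a) − π₂(a)| equals twice the total variation distance between π₁ and π₂, the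 map π ↦ D_f(π‖q) is 4α-strongly convex with respect to total variation. -/
/-- If `f` is differentiable and `α`-strongly convex on `[0,∞)`, then the Bregman
gap of the `f`-divergence `π ↦ D_f(π‖q)` between two pmfs `π₁, π₂` is at least
`(α/2)·(Σ_a |π₁(a) − π₂(a)|)²`; i.e. `D_f(·‖q)` is `4α`-strongly convex with
respect to total variation. -/
theorem stmt8 {A : Type*} [Fintype A] [Nonempty A]
    (q : A → ℝ) (hq0 : ∀ a, 0 < q a) (hq1 : ∑ a, q a = 1)
    (α : ℝ) (hα : 0 < α)
    (f f' : ℝ → ℝ)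
    (hdiff : ∀ x ∈ Set.Ici (0 : ℝ), HasDerivWithinAt f (f' x) (Set.Ici 0) x)
    (hsc : ∀ x ∈ Set.Ici (0 : ℝ), ∀ y ∈ Set.Ici (0 : ℝ),
      f y + f' y * (x - y) + α / 2 * (x - y) ^ 2 ≤ f x)
    (π₁ π₂ : A → ℝ)
    (hπ₁0 : ∀ a, 0 ≤ π₁ a) (hπ₁1 : ∑ a, π₁ a = 1)
    (hπ₂0 : ∀ a, 0 ≤ π₂ a) (hπ₂1 : ∑ a, π₂ a = 1) :
    α / 2 * (∑ a, |π₁ a - π₂ a|) ^ 2 ≤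
      (∑ a, q a * f (π₁ a / q a)) - (∑ a, q a * f (π₂ a / q a))
        - ∑ a, (π₁ a - π₂ a) * f' (π₂ a / q a) := by
  have h1 : (∑ a, |π₁ a - π₂ a|) ^ 2 ≤ ∑ a, |π₁ a - π₂ a| ^ 2 / q a := by
    have h := Finset.sq_sum_div_le_sum_sq_div Finset.univ (fun a => |π₁ a - π₂ a|)
      (g := q) (fun a _ => hq0 a)
    rwa [hq1, div_one] at h
  have h2 : ∀ a, α / 2 * (|π₁ a - π₂ a| ^ 2 / q a) ≤
      q a * f (π₁ a / q a) - q a * f (π₂ a / q a) - (π₁ a - π₂ a) * f' (π₂ a / q a) := by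
    intro a
    have hq := hq0 a
    have h := mul_le_mul_of_nonneg_left
      (hsc (π₁ a / q a) (div_nonneg (hπ₁0 a) hq.le) (π₂ a / q a) (div_nonneg (hπ₂0 a) hq.le)) hq.le
    have e : q a * (f (π₂ a / q a) + f' (π₂ a / q a) * (π₁ a / q a - π₂ a / q a)
        + α / 2 * (π₁ a / q a - π₂ a / q a) ^ 2) =
        q a * f (π₂ a / q a) + (π₁ a - π₂ a) * f' (π₂ a / q a)
          + α / 2 * ((π₁ a - π₂ a) ^ 2 / q a) := by
      generalize f (π₂ a / q a) = u
      generalize f' (π₂ a / q a) = v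
      field_simp
    rw [e] at h
    rw [sq_abs]
    linarith
  calc α / 2 * (∑ a, |π₁ a - π₂ a|) ^ 2
      ≤ α / 2 * ∑ a, |π₁ a - π₂ a| ^ 2 / q a :=
        mul_le_mul_of_nonneg_left h1 (by positivity)
    _ = ∑ a, α / 2 * (|π₁ a - π₂ a| ^ 2 / q a) := Finset.mul_sum _ _ _
    _ ≤ _ := Finset.sum_le_sum fun a _ => h2 a
    _ = _ := by rw [Finset.sum_sub_distrib, Finset.sum_sub_distrib]
end

section
/- In the finite f-divergence-regularized contextual bandit setup, let r, g : S×A → ℝ, and let π*, π̂ be policies such that for every s ∈ S, π*(·|s) maximizes π ↦ Σ_a π(a)·r(s,a) − η⁻¹·Σ_a π_ref(a|s)·f(π(a)/π_ref(a|s)) over probability mass functions on A, and π̂(·|s) maximizes the same expression with g in place of r. Then J_r(π*) − J_r(π̂) ≤ (η/α)·Σ_{s∈S} Σ_{a∈A} ρ(s)·π_ref(a|s)·(r(s,a) − g(s,a))²; in particular the suboptimality is controlled by the squared estimation error under the reference policy, with no coverage condition. -/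
/-- The `f`-divergence-regularized objective of a policy `π` with reward `h`. -/
noncomputable def Jf {S A : Type*} [Fintype S] [Fintype A]
    (ρ : S → ℝ) (πref : S → A → ℝ) (f : ℝ → ℝ) (η : ℝ)
    (h : S → A → ℝ) (π : S → A → ℝ) : ℝ :=
  ∑ s, ρ s * ((∑ a, π s a * h s a) - η⁻¹ * ∑ a, πref s a * f (π s a / πref s a))

theorem term_aux (f : ℝ → ℝ) (α η : ℝ) (hα : 0 < α) (hη : 0 < η)
    (hf : ConvexOn ℝ (Set.Ici (0 : ℝ)) (fun x => f x - α / 2 * x ^ 2))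
    (p u v r g : ℝ) (hp : 0 < p) (hu : 0 ≤ u) (hv : 0 ≤ v) :
    (u * r - η⁻¹ * (p * f (u / p))) - (v * r - η⁻¹ * (p * f (v / p))) ≤
      η / α * (p * (r - g) ^ 2) + 2 * (((u + v) / 2 * g - η⁻¹ * (p * f ((u + v) / 2 / p)))
        - (v * g - η⁻¹ * (p * f (v / p)))) := by
  obtain ⟨x, rfl⟩ : ∃ x, u = p * x := ⟨u / p, by field_simp⟩
  obtain ⟨y, rfl⟩ : ∃ y, v = p * y := ⟨v / p, by field_simp⟩
  have hx : 0 ≤ x := nonneg_of_mul_nonneg_right hu hp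
  have hy : 0 ≤ y := nonneg_of_mul_nonneg_right hv hp
  have e1 : p * x / p = x := by field_simp
  have e2 : p * y / p = y := by field_simp
  have e3 : (p * x + p * y) / 2 / p = (x + y) / 2 := by field_simp
  rw [e1, e2, e3]
  have hm := hf.2 (Set.mem_Ici.2 hx) (Set.mem_Ici.2 hy) (by norm_num : (0:ℝ) ≤ 1/2)
    (by norm_num : (0:ℝ) ≤ 1/2) (by norm_num)
  simp only [smul_eq_mul] at hm
  rw [show (1/2 : ℝ) * x + 1/2 * y = (x + y) / 2 by ring] at hm
  have hm' : α / 4 * (x - y) ^ 2 ≤ f x + f y - 2 * f ((x + y) / 2) := by nlinarith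
  have h1 := mul_le_mul_of_nonneg_left hm' (inv_pos.2 hη).le
  have h2 : η / α * (r - g) ^ 2 + η⁻¹ * (α / 4 * (x - y) ^ 2) - (x - y) * (r - g)
      = η / α * ((r - g) - α / (2 * η) * (x - y)) ^ 2 := by
    field_simp
    ring
  have h3 : 0 ≤ η / α * ((r - g) - α / (2 * η) * (x - y)) ^ 2 := by positivity
  have h4 : 0 ≤ η / α * (r - g) ^ 2 + η⁻¹ * (f x + f y - 2 * f ((x + y) / 2))
      - (x - y) * (r - g) := by linarith
  have h5 := mul_nonneg hp.le h4
  nlinarith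

/-- Coverage-free suboptimality bound for `f`-divergence regularization with
`α`-strongly convex `f`: if `π*` and `π̂` maximize the regularized objective for
rewards `r` and `g` respectively, then
`J_r(π*) − J_r(π̂) ≤ (η/α)·E_{ρ × π_ref}[(r − g)²]`. -/
theorem stmt9 {S A : Type*} [Fintype S] [Fintype A] [Nonempty S] [Nonempty A]
    (ρ : S → ℝ) (hρ0 : ∀ s, 0 ≤ ρ s) (hρ1 : ∑ s, ρ s = 1)
    (πref : S → A → ℝ) (hpos : ∀ s a, 0 < πref s a) (hsum : ∀ s, ∑ a, πref s a = 1)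
    (η : ℝ) (hη : 0 < η) (α : ℝ) (hα : 0 < α)
    (f : ℝ → ℝ) (hf : ConvexOn ℝ (Set.Ici (0 : ℝ)) (fun x => f x - α / 2 * x ^ 2))
    (r g : S → A → ℝ) (πstar πhat : S → A → ℝ)
    (hπstar0 : ∀ s a, 0 ≤ πstar s a) (hπstar1 : ∀ s, ∑ a, πstar s a = 1)
    (hπhat0 : ∀ s a, 0 ≤ πhat s a) (hπhat1 : ∀ s, ∑ a, πhat s a = 1)
    (hstar : ∀ s, ∀ π : A → ℝ, (∀ a, 0 ≤ π a) → (∑ a, π a = 1) →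
      (∑ a, π a * r s a) - η⁻¹ * ∑ a, πref s a * f (π a / πref s a) ≤
        (∑ a, πstar s a * r s a) - η⁻¹ * ∑ a, πref s a * f (πstar s a / πref s a))
    (hhat : ∀ s, ∀ π : A → ℝ, (∀ a, 0 ≤ π a) → (∑ a, π a = 1) →
      (∑ a, π a * g s a) - η⁻¹ * ∑ a, πref s a * f (π a / πref s a) ≤
        (∑ a, πhat s a * g s a) - η⁻¹ * ∑ a, πref s a * f (πhat s a / πref s a)) :
    Jf ρ πref f η r πstar - Jf ρ πref f η r πhat ≤
      η / α * ∑ s, ∑ a, ρ s * πref s a * (r s a - g s a) ^ 2 := by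
  unfold Jf
  rw [← Finset.sum_sub_distrib, Finset.mul_sum]
  refine Finset.sum_le_sum fun s _ => ?_
  have hm := hhat s (fun a => (πstar s a + πhat s a) / 2)
    (fun a => by have := hπstar0 s a; have := hπhat0 s a; positivity)
    (by rw [← Finset.sum_div, Finset.sum_add_distrib, hπstar1, hπhat1]; norm_num)
  have ht := Finset.sum_le_sum fun a (_ : a ∈ Finset.univ) =>
    term_aux f α η hα hη hf (πref s a) (πstar s a) (πhat s a) (r s a) (g s a)
      (hpos s a) (hπstar0 s a) (hπhat0 s a)
  simp only [Finset.sum_sub_distrib, Finset.sum_add_distrib, ← Finset.mul_sum] at ht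
  have h := mul_le_mul_of_nonneg_left (ht.trans (add_le_of_nonpos_right (by linarith))) (hρ0 s)
  simp only [mul_assoc, ← Finset.mul_sum]
  linarith
end

section
/- In the finite KL-regularized contextual bandit setup with reward r : S×A → ℝ, suppose g : S×A → ℝ and b : S → ℝ satisfy g(s,a) − b(s) ≤ r(s,a) for all (s,a) ∈ S×A. Let π* = π_r and π_g be the Gibbs policies of r and g. Then J(π*) − J(π_g) ≤ η·Σ_{s∈S} ρ(s)·Σ_{a∈A} π*(a|s)·(r(s,a) − g(s,a) + b(s))². -/
theorem aux_log {A : Type*} [Fintype A] [Nonempty A] (w : A → ℝ) (hw : ∀ a, 0 < w a)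
    (η : ℝ) (f : A → ℝ) (a : A) :
    Real.log (w a * Real.exp (η * f a) / (∑ a', w a' * Real.exp (η * f a')) / w a)
      = η * f a - Real.log (∑ a', w a' * Real.exp (η * f a')) := by
  have hZ : 0 < ∑ a', w a' * Real.exp (η * f a') :=
    Finset.sum_pos (fun a _ => mul_pos (hw a) (Real.exp_pos _)) Finset.univ_nonempty
  have h := (hw a).ne'
  have : w a * Real.exp (η * f a) / (∑ a', w a' * Real.exp (η * f a')) / w a
      = Real.exp (η * f a) / (∑ a', w a' * Real.exp (η * f a')) := by
    field_simp
  rw [this, Real.log_div (Real.exp_pos _).ne' hZ.ne', Real.log_exp]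

theorem aux_abs {A : Type*} [Fintype A] (p q : A → ℝ) (hp : ∀ a, 0 < p a)
    (hp1 : ∑ a, p a = 1) (hq1 : ∑ a, q a = 1) (η b L M : ℝ) (hη : 0 < η) (r g : A → ℝ)
    (hd : ∀ a, g a - b ≤ r a)
    (hq : ∀ a, q a = p a * Real.exp (L - M - η * (r a - g a))) :
    ∑ a, p a * (r a - η⁻¹ * (η * r a - L)) - ∑ a, q a * (r a - η⁻¹ * (η * g a - M))
      ≤ η * ∑ a, p a * (r a - g a + b) ^ 2 := by
  have e1 : ∑ a, p a * (r a - η⁻¹ * (η * r a - L)) = η⁻¹ * L := by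
    have : ∀ a, p a * (r a - η⁻¹ * (η * r a - L)) = p a * (η⁻¹ * L) := by
      intro a; field_simp; ring
    simp only [this]
    rw [← Finset.sum_mul, hp1, one_mul]
  have e2 : ∑ a, q a * (r a - η⁻¹ * (η * g a - M))
      = ∑ a, q a * (r a - g a + b) - b + η⁻¹ * M := by
    have : ∀ a, q a * (r a - η⁻¹ * (η * g a - M))
        = q a * (r a - g a + b) + q a * (η⁻¹ * M - b) := by
      intro a; field_simp; ring
    simp only [this]
    rw [Finset.sum_add_distrib, ← Finset.sum_mul, hq1]; ring
  have hlow : ∀ a, p a * (1 + (L - M + η * b) - η * (r a - g a + b)) ≤ q a := by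
    intro a
    rw [hq]
    apply mul_le_mul_of_nonneg_left _ (hp a).le
    linarith [Real.add_one_le_exp (L - M - η * (r a - g a))]
  have hJ : L - M + η * b ≤ η * ∑ a, p a * (r a - g a + b) := by
    have h := Finset.sum_le_sum (fun a (_ : a ∈ Finset.univ) => hlow a)
    have : ∑ a, p a * (1 + (L - M + η * b) - η * (r a - g a + b))
        = (1 + (L - M + η * b)) - η * ∑ a, p a * (r a - g a + b) := by
      have h2 : ∀ a, p a * (1 + (L - M + η * b) - η * (r a - g a + b))
        = p a * (1 + (L - M + η * b)) - η * (p a * (r a - g a + b)) := by intro a; ring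
      simp only [h2]
      rw [Finset.sum_sub_distrib, ← Finset.sum_mul, hp1, ← Finset.mul_sum, one_mul]
    rw [this, hq1] at h
    linarith
  have hK : 0 ≤ L - M + η * b := by
    have h : ∑ a, q a ≤ ∑ a, p a * Real.exp (L - M + η * b) := by
      apply Finset.sum_le_sum
      intro a _
      rw [hq]
      apply mul_le_mul_of_nonneg_left _ (hp a).le
      apply Real.exp_le_exp.mpr
      nlinarith [hd a]
    rw [← Finset.sum_mul, hp1, hq1, one_mul] at h
    exact Real.one_le_exp_iff.mp h
  have hF : ∑ a, p a * (r a - g a + b) - ∑ a, q a * (r a - g a + b)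
      ≤ η * ∑ a, p a * (r a - g a + b) ^ 2 := by
    rw [← Finset.sum_sub_distrib, Finset.mul_sum]
    apply Finset.sum_le_sum
    intro a _
    have hD : 0 ≤ r a - g a + b := by linarith [hd a]
    have h1 := mul_le_mul_of_nonneg_right (hlow a) hD
    have h2 := mul_nonneg (mul_nonneg (hp a).le hK) hD
    linarith
  rw [e1, e2]
  have h3 : η⁻¹ * (L - M + η * b) ≤ ∑ a, p a * (r a - g a + b) := by
    rw [inv_mul_le_iff₀ hη]; exact hJ
  have h4 : η⁻¹ * (L - M + η * b) = η⁻¹ * L - η⁻¹ * M + b := by field_simp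
  linarith

/-- Pessimism bound with a per-state bias: if `g(s,a) − b(s) ≤ r(s,a)` for all
`(s,a)`, then the suboptimality of the Gibbs policy of `g` is bounded by `η`
times the bias-corrected squared estimation error under `π* = π_r`. -/
theorem stmt11 {S A : Type*} [Fintype S] [Fintype A] [Nonempty S] [Nonempty A]
    (ρ : S → ℝ) (hρ0 : ∀ s, 0 ≤ ρ s) (hρ1 : ∑ s, ρ s = 1)
    (πref : S → A → ℝ) (hpos : ∀ s a, 0 < πref s a) (hsum : ∀ s, ∑ a, πref s a = 1)
    (η : ℝ) (hη : 0 < η) (r g : S → A → ℝ) (b : S → ℝ)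
    (hpess : ∀ s a, g s a - b s ≤ r s a) :
    Jkl ρ πref η r (gibbs πref η r) - Jkl ρ πref η r (gibbs πref η g) ≤
      η * ∑ s, ρ s * ∑ a, gibbs πref η r s a * (r s a - g s a + b s) ^ 2 := by
  unfold Jkl
  rw [← Finset.sum_sub_distrib, Finset.mul_sum]
  apply Finset.sum_le_sum
  intro s _
  rw [← mul_sub, mul_left_comm]
  apply mul_le_mul_of_nonneg_left _ (hρ0 s)
  have hZ : ∀ f : S → A → ℝ, 0 < ∑ a', πref s a' * Real.exp (η * f s a') := fun f =>
    Finset.sum_pos (fun a _ => mul_pos (hpos s a) (Real.exp_pos _)) Finset.univ_nonempty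
  have h1 : ∀ f : S → A → ℝ, ∑ a, gibbs πref η f s a = 1 := by
    intro f
    unfold gibbs
    rw [← Finset.sum_div, div_self (hZ f).ne']
  have hl : ∀ (f : S → A → ℝ) a, Real.log (gibbs πref η f s a / πref s a)
      = η * f s a - Real.log (∑ a', πref s a' * Real.exp (η * f s a')) :=
    fun f a => aux_log (πref s) (hpos s) η (f s) a
  simp only [hl]
  refine aux_abs (gibbs πref η r s) (gibbs πref η g s)
    (fun a => div_pos (mul_pos (hpos s a) (Real.exp_pos _)) (hZ r)) (h1 r) (h1 g)
    η (b s) _ _ hη (r s) (g s) (hpess s) ?_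
  intro a
  unfold gibbs
  have h2 := (hZ r).ne'
  have h3 := (hZ g).ne'
  rw [mul_sub, Real.exp_sub, Real.exp_sub, Real.exp_sub, Real.exp_log (hZ r),
    Real.exp_log (hZ g)]
  have h4 := (Real.exp_pos (η * r s a)).ne'
  have h5 := (Real.exp_pos (η * g s a)).ne'
  generalize (∑ a', πref s a' * Real.exp (η * r s a')) = Z at *
  generalize (∑ a', πref s a' * Real.exp (η * g s a')) = W at *
  field_simp
end

section
/- Let S and A be nonempty finite sets, ρ a probability mass function on S with ρ(s) > 0 for all s, and π_ref a reference policy with π_ref(a|s) > 0 for all (s,a). Let F be a set of functions S×A → ℝ. For (s,a) ∈ S×A define D²(s,a) = sup of the set { ((g−h)(s,a))² / ( Σ_{s',a'} ρ(s')·π_ref(a'|s')·((g−h)(s',a'))² ) : g, h ∈ F with Σ_{s',a'} ρ(s')·π_ref(a'|s')·((g−h)(s',a'))² ≠ 0 } (with the supremum of the empty set taken to be 0). Then for every policy π*: Σ_{s∈S} Σ_{a∈A} ρ(s)·π*(a|s)·D²(s,a) ≤ |S|·|A|·max_{(s,a)} ( π*(a|s)/π_ref(a|s) ); i.e., the D²-based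 single-policy concentrability D²_{π*} is at most |S||A| times the density-ratio single-policy concentrability C^{π*}. -/
/-- The `D²`-based single-policy concentrability is at most `|S|·|A|` times the
density-ratio single-policy concentrability: for any policy `π*`,
`E_{(s,a)∼ρ×π*}[D²(s,a)] ≤ |S|·|A|·max_{(s,a)} π*(a|s)/π_ref(a|s)`. -/
theorem stmt12 {S A : Type*} [Fintype S] [Fintype A] [Nonempty S] [Nonempty A]
    (ρ : S → ℝ) (hρ0 : ∀ s, 0 < ρ s) (hρ1 : ∑ s, ρ s = 1)
    (πref : S → A → ℝ) (hpos : ∀ s a, 0 < πref s a) (hsum : ∀ s, ∑ a, πref s a = 1)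
    (F : Set ((S → A → ℝ)))
    (πstar : S → A → ℝ)
    (hπstar0 : ∀ s a, 0 ≤ πstar s a) (hπstar1 : ∀ s, ∑ a, πstar s a = 1) :
    (∑ s, ∑ a, ρ s * πstar s a *
      sSup {x : ℝ | ∃ g ∈ F, ∃ h ∈ F,
        (∑ s', ∑ a', ρ s' * πref s' a' * (g s' a' - h s' a') ^ 2) ≠ 0 ∧
        x = (g s a - h s a) ^ 2 /
          ∑ s', ∑ a', ρ s' * πref s' a' * (g s' a' - h s' a') ^ 2})
      ≤ (Fintype.card S : ℝ) * (Fintype.card A : ℝ) *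
          ⨆ s : S, ⨆ a : A, πstar s a / πref s a := by
  have hterm : ∀ s a, ρ s * πstar s a *
      sSup {x : ℝ | ∃ g ∈ F, ∃ h ∈ F,
        (∑ s', ∑ a', ρ s' * πref s' a' * (g s' a' - h s' a') ^ 2) ≠ 0 ∧
        x = (g s a - h s a) ^ 2 /
          ∑ s', ∑ a', ρ s' * πref s' a' * (g s' a' - h s' a') ^ 2}
      ≤ ⨆ s : S, ⨆ a : A, πstar s a / πref s a := by
    intro s a
    have hw : 0 < ρ s * πref s a := mul_pos (hρ0 s) (hpos s a)
    have hD : sSup {x : ℝ | ∃ g ∈ F, ∃ h ∈ F,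
        (∑ s', ∑ a', ρ s' * πref s' a' * (g s' a' - h s' a') ^ 2) ≠ 0 ∧
        x = (g s a - h s a) ^ 2 /
          ∑ s', ∑ a', ρ s' * πref s' a' * (g s' a' - h s' a') ^ 2}
        ≤ 1 / (ρ s * πref s a) := by
      apply Real.sSup_le _ (by positivity)
      rintro x ⟨g, -, h, -, hne, rfl⟩
      have hnn : ∀ s' a', 0 ≤ ρ s' * πref s' a' * (g s' a' - h s' a') ^ 2 := fun s' a' =>
        mul_nonneg (mul_pos (hρ0 s') (hpos s' a')).le (sq_nonneg _)
      have h0 : 0 < ∑ s', ∑ a', ρ s' * πref s' a' * (g s' a' - h s' a') ^ 2 :=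
        lt_of_le_of_ne (Finset.sum_nonneg fun s' _ => Finset.sum_nonneg fun a' _ => hnn s' a')
          (Ne.symm hne)
      have h1 : ρ s * πref s a * (g s a - h s a) ^ 2 ≤
          ∑ a', ρ s * πref s a' * (g s a' - h s a') ^ 2 :=
        Finset.single_le_sum (f := fun a' => ρ s * πref s a' * (g s a' - h s a') ^ 2)
          (fun a' _ => hnn s a') (Finset.mem_univ a)
      have h2 : ∑ a', ρ s * πref s a' * (g s a' - h s a') ^ 2 ≤
          ∑ s', ∑ a', ρ s' * πref s' a' * (g s' a' - h s' a') ^ 2 :=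
        Finset.single_le_sum
          (f := fun s' => ∑ a', ρ s' * πref s' a' * (g s' a' - h s' a') ^ 2)
          (fun s' _ => Finset.sum_nonneg fun a' _ => hnn s' a') (Finset.mem_univ s)
      rw [div_le_div_iff₀ h0 hw]
      linarith
    have h3 : πstar s a / πref s a ≤ ⨆ a : A, πstar s a / πref s a :=
      le_ciSup (f := fun a => πstar s a / πref s a) (Set.finite_range _).bddAbove a
    have h4 : (⨆ a : A, πstar s a / πref s a) ≤ ⨆ s : S, ⨆ a : A, πstar s a / πref s a :=
      le_ciSup (f := fun s => ⨆ a : A, πstar s a / πref s a) (Set.finite_range _).bddAbove s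
    refine le_trans (mul_le_mul_of_nonneg_left hD
      (mul_nonneg (hρ0 s).le (hπstar0 s a))) (le_trans (le_of_eq ?_) (h3.trans h4))
    have := (hρ0 s).ne'
    have := (hpos s a).ne'
    field_simp
  refine (Finset.sum_le_sum fun s _ => Finset.sum_le_sum fun a _ => hterm s a).trans ?_
  simp [mul_assoc]
end

section
/- Let S and A be nonempty finite sets, π_ref a reference policy with π_ref(a|s) > 0 for all (s,a), η > 0, and r : S×A → [0,1]. Let π* be the Gibbs policy π*(a|s) = π_ref(a|s)·exp(η·r(s,a)) / Σ_{a'} π_ref(a'|s)·exp(η·r(s,a')). Then π*(a|s)/π_ref(a|s) ≤ exp(η) for all (s,a); i.e., the density-ratio single-policy concentrability C^{π*} of the KL-regularized optimal policy always satisfies C^{π*} ≤ exp(η) when rewards lie in [0,1]. -/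
/-- With rewards in `[0,1]`, the KL-regularized optimal (Gibbs) policy `π*`
always has density-ratio single-policy concentrability at most `exp η`:
`π*(a|s)/π_ref(a|s) ≤ exp η` for all `(s,a)`. -/
theorem stmt13 {S A : Type*} [Fintype S] [Fintype A] [Nonempty S] [Nonempty A]
    (πref : S → A → ℝ) (hpos : ∀ s a, 0 < πref s a) (hsum : ∀ s, ∑ a, πref s a = 1)
    (η : ℝ) (hη : 0 < η)
    (r : S → A → ℝ) (hr : ∀ s a, r s a ∈ Set.Icc (0 : ℝ) 1)
    (πstar : S → A → ℝ)
    (hπstar : ∀ s a, πstar s a =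
      πref s a * Real.exp (η * r s a) / ∑ a', πref s a' * Real.exp (η * r s a')) :
    ∀ s a, πstar s a / πref s a ≤ Real.exp η := by
  intro s a
  have hZ : 1 ≤ ∑ a', πref s a' * Real.exp (η * r s a') := by
    rw [← hsum s]
    refine Finset.sum_le_sum fun b _ => ?_
    exact le_mul_of_one_le_right (hpos s b).le
      (Real.one_le_exp (mul_nonneg hη.le (hr s b).1))
  rw [hπstar s a, div_right_comm, mul_div_cancel_left₀ _ (hpos s a).ne']
  refine (div_le_self (Real.exp_pos _).le hZ).trans (Real.exp_le_exp.mpr ?_)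
  exact mul_le_of_le_one_right hη.le (hr s a).2
end

section
/- Let A be a nonempty finite set and let μ, p, q be probability mass functions on A with p(a) > 0 and q(a) > 0 for all a. Then KL(μ‖p) + KL(μ‖q) ≥ −2·log( Σ_{a∈A} √(p(a)·q(a)) ). -/
/-- Bhattacharyya-type bound: for pmfs `μ, p, q` on a finite set with `p, q`
everywhere positive, `KL(μ‖p) + KL(μ‖q) ≥ −2·log(Σ_a √(p(a)·q(a)))`. -/
theorem stmt14 {A : Type*} [Fintype A] [Nonempty A]
    (μ p q : A → ℝ)
    (hμ0 : ∀ a, 0 ≤ μ a) (hμ1 : ∑ a, μ a = 1)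
    (hp0 : ∀ a, 0 < p a) (hp1 : ∑ a, p a = 1)
    (hq0 : ∀ a, 0 < q a) (hq1 : ∑ a, q a = 1) :
    -2 * Real.log (∑ a, Real.sqrt (p a * q a)) ≤
      (∑ a, μ a * Real.log (μ a / p a)) + ∑ a, μ a * Real.log (μ a / q a) := by
  set Z := ∑ a, Real.sqrt (p a * q a) with hZ
  have hr : ∀ a, 0 < Real.sqrt (p a * q a) := fun a =>
    Real.sqrt_pos.mpr (mul_pos (hp0 a) (hq0 a))
  have hZ0 : 0 < Z := Finset.sum_pos (fun a _ => hr a) Finset.univ_nonempty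
  have key : ∀ a, 2 * (μ a - Real.sqrt (p a * q a) / Z - μ a * Real.log Z) ≤
      μ a * Real.log (μ a / p a) + μ a * Real.log (μ a / q a) := by
    intro a
    rcases (hμ0 a).eq_or_lt with h | h
    · rw [← h]
      have := div_pos (hr a) hZ0
      simp only [zero_mul]
      linarith
    · have h1 := Real.log_le_sub_one_of_pos (div_pos (hr a) (mul_pos hZ0 h))
      rw [Real.log_div (hr a).ne' (mul_pos hZ0 h).ne', Real.log_mul hZ0.ne' h.ne',
        Real.log_sqrt (mul_pos (hp0 a) (hq0 a)).le,
        Real.log_mul (hp0 a).ne' (hq0 a).ne'] at h1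
      rw [Real.log_div h.ne' (hp0 a).ne', Real.log_div h.ne' (hq0 a).ne']
      have h2 := mul_le_mul_of_nonneg_left h1 h.le
      have h3 : μ a * (Real.sqrt (p a * q a) / (Z * μ a) - 1) =
          Real.sqrt (p a * q a) / Z - μ a := by
        have := h.ne'
        field_simp
      rw [h3] at h2
      linarith
  have hs := Finset.sum_le_sum (fun a (_ : a ∈ Finset.univ) => key a)
  rw [Finset.sum_add_distrib, ← Finset.mul_sum, Finset.sum_sub_distrib,
    Finset.sum_sub_distrib, ← Finset.sum_div, ← Finset.sum_mul, hμ1, ← hZ,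
    div_self hZ0.ne'] at hs
  linarith
end

section
/- Let x ∈ ℝ and define two probability mass functions on the two-element set {1, 2} by π₊(1) = e^x/(e^x + 1), π₊(2) = 1/(e^x + 1), and π₋(1) = e^{−x}/(e^{−x} + 1), π₋(2) = 1/(e^{−x} + 1). Then for every probability mass function μ on {1, 2}: KL(μ‖π₊) + KL(μ‖π₋) ≥ log( (e^x + 1)·(e^{−x} + 1) / 4 ). -/
theorem aux_split (m p : ℝ) (hp : 0 < p) :
    m * Real.log (m / p) = m * Real.log m - m * Real.log p := by
  rcases eq_or_ne m 0 with h | h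
  · simp [h]
  · rw [Real.log_div h hp.ne']; ring

theorem aux_ent (m : ℝ) (hm : 0 ≤ m) :
    m - 1 / 2 - m * Real.log 2 ≤ m * Real.log m := by
  rcases hm.eq_or_lt with h | h
  · simp [← h]
  · have h1 := Real.one_sub_inv_le_log_of_pos (show (0:ℝ) < 2 * m by positivity)
    rw [Real.log_mul (by norm_num) h.ne'] at h1
    have h2 := mul_le_mul_of_nonneg_left h1 hm
    have h3 : m * (1 - (2 * m)⁻¹) = m - 1 / 2 := by field_simp
    rw [h3] at h2
    linarith

/-- Per-state suboptimality lower bound for the hard instance: for the two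
logistic pmfs `π₊, π₋` on `{1,2}` induced by `±x`, every pmf `μ` satisfies
`KL(μ‖π₊) + KL(μ‖π₋) ≥ log((eˣ + 1)·(e⁻ˣ + 1)/4)`. -/
theorem stmt15 (x : ℝ)
    (πp πm : Fin 2 → ℝ)
    (hπp0 : πp 0 = Real.exp x / (Real.exp x + 1))
    (hπp1 : πp 1 = 1 / (Real.exp x + 1))
    (hπm0 : πm 0 = Real.exp (-x) / (Real.exp (-x) + 1))
    (hπm1 : πm 1 = 1 / (Real.exp (-x) + 1))
    (μ : Fin 2 → ℝ) (hμ0 : ∀ a, 0 ≤ μ a) (hμ1 : ∑ a, μ a = 1) :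
    Real.log ((Real.exp x + 1) * (Real.exp (-x) + 1) / 4) ≤
      (∑ a, μ a * Real.log (μ a / πp a)) + ∑ a, μ a * Real.log (μ a / πm a) := by
  have hA : 0 < Real.exp x + 1 := by positivity
  have hB : 0 < Real.exp (-x) + 1 := by positivity
  rw [Fin.sum_univ_two] at hμ1
  rw [Fin.sum_univ_two, Fin.sum_univ_two, hπp0, hπp1, hπm0, hπm1,
    aux_split _ _ (by positivity), aux_split _ _ (by positivity),
    aux_split _ _ (by positivity), aux_split _ _ (by positivity),
    Real.log_div (by positivity) (by norm_num), Real.log_mul hA.ne' hB.ne',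
    Real.log_div (by positivity) hA.ne', Real.log_div (by norm_num) hA.ne',
    Real.log_div (by positivity) hB.ne', Real.log_div (by norm_num) hB.ne',
    Real.log_exp, Real.log_exp, Real.log_one]
  have h4 : Real.log 4 = 2 * Real.log 2 := by
    rw [show (4:ℝ) = 2 ^ 2 by norm_num, Real.log_pow]; norm_num
  have e0 := aux_ent _ (hμ0 0)
  have e1 := aux_ent _ (hμ0 1)
  have hm : μ 1 = 1 - μ 0 := by linarith
  rw [h4]
  rw [hm] at e1 ⊢
  linarith
end

section
/- For all real η > 0 and δ > 0: η⁻¹·log( (e^{ηδ} + 1)·(e^{−ηδ} + 1) / 4 ) ≥ min( η·δ²/8 , 3·δ/10 ). Specifically, if η·δ ≤ 2 the left-hand side is at least η·δ²/8, and if η·δ > 2 it is at least 3·δ/10. -/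
theorem aux_small (x : ℝ) (hx : 0 < x) (h2 : x ≤ 2) :
    x ^ 2 / 8 ≤ Real.log ((Real.exp x + 1) * (Real.exp (-x) + 1) / 4) := by
  have hs : x / 2 ≤ Real.sinh (x / 2) := Real.self_le_sinh_iff.2 (by linarith)
  rw [Real.sinh_eq] at hs
  have e1 : Real.exp x = Real.exp (x / 2) ^ 2 := by
    rw [← Real.exp_nat_mul]; congr 1; push_cast; ring
  have e2 : Real.exp (-x) = Real.exp (-(x / 2)) ^ 2 := by
    rw [← Real.exp_nat_mul]; congr 1; push_cast; ring
  have e3 : Real.exp (x / 2) * Real.exp (-(x / 2)) = 1 := by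
    rw [← Real.exp_add]; simp
  rw [Real.le_log_iff_exp_le (by positivity)]
  have key : 1 + x ^ 2 / 4 ≤ (Real.exp x + 1) * (Real.exp (-x) + 1) / 4 := by
    rw [e1, e2]
    generalize Real.exp (x / 2) = a at *
    generalize Real.exp (-(x / 2)) = b at *
    have h1 : x ≤ a - b := by linarith
    have h3 : x ^ 2 ≤ (a - b) ^ 2 := pow_le_pow_left₀ hx.le h1 2
    have h4 : (a ^ 2 + 1) * (b ^ 2 + 1) = (a * b) ^ 2 + (a - b) ^ 2 + 2 * (a * b) + 1 := by ring
    rw [h4, e3]; linarith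
  refine le_trans ?_ key
  have ht := Real.one_sub_le_exp_neg (x ^ 2 / 8)
  have hm : Real.exp (x ^ 2 / 8) * Real.exp (-(x ^ 2 / 8)) = 1 := by
    rw [← Real.exp_add]; simp
  have hp := Real.exp_pos (x ^ 2 / 8)
  have hx4 : x ^ 2 ≤ 4 := by nlinarith
  have h0 : 0 ≤ x ^ 2 := sq_nonneg x
  have h5 : Real.exp (x ^ 2 / 8) * (1 - x ^ 2 / 8) ≤ 1 := by
    exact (mul_le_mul_of_nonneg_left ht hp.le).trans hm.le
  have h6 : 1 ≤ (1 + x ^ 2 / 4) * (1 - x ^ 2 / 8) := by nlinarith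
  exact le_of_mul_le_mul_right (h5.trans h6) (by linarith)

theorem aux_large (x : ℝ) (h2 : 2 < x) :
    3 * x / 10 ≤ Real.log ((Real.exp x + 1) * (Real.exp (-x) + 1) / 4) := by
  rw [Real.le_log_iff_exp_le (by positivity)]
  have e1 : Real.exp x = Real.exp (x / 10) ^ 10 := by
    rw [← Real.exp_nat_mul]; congr 1; push_cast; ring
  have e2 : Real.exp (3 * x / 10) = Real.exp (x / 10) ^ 3 := by
    rw [← Real.exp_nat_mul]; congr 1; push_cast; ring
  have e3 : Real.exp x * Real.exp (-x) = 1 := by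
    rw [← Real.exp_add]; simp
  have hy : (1.22 : ℝ) ≤ Real.exp (x / 10) := by
    have := Real.quadratic_le_exp_of_nonneg (x := x / 10) (by linarith)
    nlinarith
  have h7 : (4 : ℝ) ≤ Real.exp (x / 10) ^ 7 :=
    le_trans (by norm_num) (pow_le_pow_left₀ (by norm_num) hy 7)
  have hc : 4 * Real.exp (3 * x / 10) ≤ Real.exp x := by
    rw [e1, e2]
    calc 4 * Real.exp (x / 10) ^ 3 ≤ Real.exp (x / 10) ^ 7 * Real.exp (x / 10) ^ 3 :=
          mul_le_mul_of_nonneg_right h7 (by positivity)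
      _ = _ := by ring
  have := Real.exp_pos (-x)
  nlinarith

/-- Elementary rate inequality: for `η, δ > 0`,
`η⁻¹·log((e^{ηδ} + 1)·(e^{−ηδ} + 1)/4) ≥ min(η·δ²/8, 3·δ/10)`; specifically
the left-hand side is at least `η·δ²/8` when `η·δ ≤ 2` and at least `3·δ/10`
when `η·δ > 2`. -/
theorem stmt16 (η δ : ℝ) (hη : 0 < η) (hδ : 0 < δ) :
    min (η * δ ^ 2 / 8) (3 * δ / 10) ≤
      η⁻¹ * Real.log ((Real.exp (η * δ) + 1) * (Real.exp (-(η * δ)) + 1) / 4) ∧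
    (η * δ ≤ 2 →
      η * δ ^ 2 / 8 ≤
        η⁻¹ * Real.log ((Real.exp (η * δ) + 1) * (Real.exp (-(η * δ)) + 1) / 4)) ∧
    (2 < η * δ →
      3 * δ / 10 ≤
        η⁻¹ * Real.log ((Real.exp (η * δ) + 1) * (Real.exp (-(η * δ)) + 1) / 4)) := by
  have hx : 0 < η * δ := mul_pos hη hδ
  have A : η * δ ≤ 2 → η * δ ^ 2 / 8 ≤
      η⁻¹ * Real.log ((Real.exp (η * δ) + 1) * (Real.exp (-(η * δ)) + 1) / 4) := by
    intro h
    rw [le_inv_mul_iff₀ hη]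
    refine le_trans (le_of_eq ?_) (aux_small _ hx h)
    ring
  have B : 2 < η * δ → 3 * δ / 10 ≤
      η⁻¹ * Real.log ((Real.exp (η * δ) + 1) * (Real.exp (-(η * δ)) + 1) / 4) := by
    intro h
    rw [le_inv_mul_iff₀ hη]
    refine le_trans (le_of_eq ?_) (aux_large _ h)
    ring
  refine ⟨?_, A, B⟩
  rcases le_or_gt (η * δ) 2 with h | h
  · exact (min_le_left _ _).trans (A h)
  · exact (min_le_right _ _).trans (B h)
end

section
/- Let α > 0, η > 0, and 0 < δ ≤ α/η. On the two-element action set {1, 2} with uniform reference q(1) = q(2) = 1/2, let f(x) = (α/2)·(x − 1)² and for a reward vector h : {1,2} → ℝ define F_h(π) = Σ_a π(a)·h(a) − η⁻¹·Σ_a q(a)·f(π(a)/q(a)) on probability mass functions π. Let r₁ = (1/2 + δ, 1/2 − δ) and r₂ = (1/2 − δ, 1/2 + δ). Then for every probability mass function π̂ on {1, 2}: ( sup_π F_{r₁}(π) − F_{r₁}(π̂) ) + ( sup_π F_{r₂}(π) − F_{r₂}(π̂) ) ≥ η·δ²/α, where each supremum is over all probability mass functions on {1, 2}. -/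
/-- Two-point suboptimality lower bound for `χ²`-type regularization: with
`f(x) = (α/2)(x−1)²`, uniform reference on `{1,2}`, and the two rewards
`r₁ = (1/2+δ, 1/2−δ)` and `r₂ = (1/2−δ, 1/2+δ)`, every pmf `π̂` satisfies
`(sup_π F_{r₁}(π) − F_{r₁}(π̂)) + (sup_π F_{r₂}(π) − F_{r₂}(π̂)) ≥ η·δ²/α`. -/
theorem stmt17 (α η δ : ℝ) (hα : 0 < α) (hη : 0 < η) (hδ0 : 0 < δ) (hδ : δ ≤ α / η)
    (q : Fin 2 → ℝ) (hq : ∀ a, q a = 1 / 2)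
    (f : ℝ → ℝ) (hf : ∀ x, f x = α / 2 * (x - 1) ^ 2)
    (F : (Fin 2 → ℝ) → (Fin 2 → ℝ) → ℝ)
    (hF : ∀ h π, F h π = (∑ a, π a * h a) - η⁻¹ * ∑ a, q a * f (π a / q a))
    (r₁ r₂ : Fin 2 → ℝ)
    (hr₁0 : r₁ 0 = 1 / 2 + δ) (hr₁1 : r₁ 1 = 1 / 2 - δ)
    (hr₂0 : r₂ 0 = 1 / 2 - δ) (hr₂1 : r₂ 1 = 1 / 2 + δ)
    (πhat : Fin 2 → ℝ) (hπhat0 : ∀ a, 0 ≤ πhat a) (hπhat1 : ∑ a, πhat a = 1) :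
    η * δ ^ 2 / α ≤
      (sSup {y : ℝ | ∃ π : Fin 2 → ℝ,
          (∀ a, 0 ≤ π a) ∧ (∑ a, π a = 1) ∧ y = F r₁ π} - F r₁ πhat)
      + (sSup {y : ℝ | ∃ π : Fin 2 → ℝ,
          (∀ a, 0 ≤ π a) ∧ (∑ a, π a = 1) ∧ y = F r₂ π} - F r₂ πhat) := by
  have key : ∀ (h π : Fin 2 → ℝ) (s : ℝ), h 0 = 1 / 2 + s → h 1 = 1 / 2 - s →
      (∑ a, π a = 1) → F h π = 1 / 2 + η * s ^ 2 / (2 * α)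
        - 2 * α / η * (π 0 - 1 / 2 - η * s / (2 * α)) ^ 2 := by
    intro h π s h0 h1 hs
    rw [Fin.sum_univ_two] at hs
    have h2 : π 1 = 1 - π 0 := by linarith
    rw [hF]
    simp only [Fin.sum_univ_two, hq, hf, h0, h1, h2]
    field_simp
    ring
  have hle : η * δ / (2 * α) ≤ 1 / 2 := by
    rw [le_div_iff₀ hη] at hδ
    rw [div_le_iff₀ (by positivity)]
    linarith
  have hpos : 0 ≤ η * δ / (2 * α) := by positivity
  have sup : ∀ (h : Fin 2 → ℝ) (s : ℝ), h 0 = 1 / 2 + s → h 1 = 1 / 2 - s →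
      |η * s / (2 * α)| ≤ 1 / 2 → 1 / 2 + η * s ^ 2 / (2 * α) ≤
      sSup {y : ℝ | ∃ π : Fin 2 → ℝ, (∀ a, 0 ≤ π a) ∧ (∑ a, π a = 1) ∧ y = F h π} := by
    intro h s h0 h1 hs
    rw [abs_le] at hs
    apply le_csSup
    · refine ⟨1 / 2 + η * s ^ 2 / (2 * α), ?_⟩
      rintro y ⟨π, -, hp, rfl⟩
      rw [key h π s h0 h1 hp]
      have : 0 ≤ 2 * α / η * (π 0 - 1 / 2 - η * s / (2 * α)) ^ 2 := by positivity
      linarith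
    · have hp : ∑ a, (![1 / 2 + η * s / (2 * α), 1 / 2 - η * s / (2 * α)] : Fin 2 → ℝ) a = 1 := by
        simp [Fin.sum_univ_two]
        ring
      refine ⟨![1 / 2 + η * s / (2 * α), 1 / 2 - η * s / (2 * α)], ?_, hp, ?_⟩
      · rw [Fin.forall_fin_two]
        constructor
        · show 0 ≤ 1 / 2 + η * s / (2 * α)
          linarith
        · show 0 ≤ 1 / 2 - η * s / (2 * α)
          linarith
      · rw [key h _ s h0 h1 hp]
        simp
  have hr₂0' : r₂ 0 = 1 / 2 + -δ := by rw [hr₂0]; ring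
  have hr₂1' : r₂ 1 = 1 / 2 - -δ := by rw [hr₂1]; ring
  have e : η * -δ / (2 * α) = -(η * δ / (2 * α)) := by ring
  have s1 := sup r₁ δ hr₁0 hr₁1 (by rw [abs_of_nonneg hpos]; exact hle)
  have s2 := sup r₂ (-δ) hr₂0' hr₂1' (by rw [e, abs_neg, abs_of_nonneg hpos]; exact hle)
  have k : F r₁ πhat + F r₂ πhat = 1 - 4 * α / η * (πhat 0 - 1 / 2) ^ 2 := by
    rw [key r₁ πhat δ hr₁0 hr₁1 hπhat1, key r₂ πhat (-δ) hr₂0' hr₂1' hπhat1]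
    field_simp
    ring
  have p : 0 ≤ 4 * α / η * (πhat 0 - 1 / 2) ^ 2 := by positivity
  have e2 : η * δ ^ 2 / α = η * δ ^ 2 / (2 * α) + η * (-δ) ^ 2 / (2 * α) := by
    field_simp
    ring
  linarith
end

section
/- In the finite f-divergence-regularized contextual bandit setup, let r, g : S×A → ℝ and b : S → ℝ, and let π*, π̂ be policies such that for every s ∈ S, π*(·|s) maximizes π ↦ Σ_a π(a)·r(s,a) − η⁻¹·Σ_a π_ref(a|s)·f(π(a)/π_ref(a|s)) over probability mass functions on A, and π̂(·|s) maximizes the same expression with g in place of r. Then J_r(π*) − J_r(π̂) ≤ (η/α)·Σ_{s∈S} Σ_{a∈A} ρ(s)·π_ref(a|s)·(r(s,a) − g(s,a) + b(s))²; i.e., the suboptimality is controlled by the squared estimation error under the reference policy after an arbitrary per-state bias correction. -/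
lemma aux_mid (α : ℝ) (f : ℝ → ℝ)
    (hf : ConvexOn ℝ (Set.Ici (0 : ℝ)) (fun x => f x - α / 2 * x ^ 2))
    (x y : ℝ) (hx : 0 ≤ x) (hy : 0 ≤ y) :
    2 * f ((x + y) / 2) ≤ f x + f y - α / 4 * (x - y) ^ 2 := by
  have h := hf.2 (Set.mem_Ici.2 hx) (Set.mem_Ici.2 hy) 
    (show (0 : ℝ) ≤ 1/2 by norm_num) (show (0 : ℝ) ≤ 1/2 by norm_num) (by norm_num)
  simp only [smul_eq_mul] at h
  rw [show (1/2 : ℝ) * x + 1/2 * y = (x + y) / 2 by ring] at h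
  nlinarith [h]

lemma aux_pt (α η : ℝ) (hα : 0 < α) (hη : 0 < η) (f : ℝ → ℝ)
    (hf : ConvexOn ℝ (Set.Ici (0 : ℝ)) (fun x => f x - α / 2 * x ^ 2))
    (P p q r g b : ℝ) (hP : 0 < P) (hp : 0 ≤ p) (hq : 0 ≤ q) :
    (p * r - η⁻¹ * (P * f (p / P))) - (q * r - η⁻¹ * (P * f (q / P))) ≤
      η / α * (P * (r - g + b) ^ 2) + 2 * (((p + q) / 2 * g - η⁻¹ * (P * f ((p + q) / 2 / P)))
        - (q * g - η⁻¹ * (P * f (q / P)))) - b * (p - q) := by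
  obtain ⟨x, rfl⟩ : ∃ x, p = P * x := ⟨p / P, by field_simp⟩
  obtain ⟨y, rfl⟩ : ∃ y, q = P * y := ⟨q / P, by field_simp⟩
  have hx : 0 ≤ x := nonneg_of_mul_nonneg_right hp hP
  have hy : 0 ≤ y := nonneg_of_mul_nonneg_right hq hP
  rw [show (P * x + P * y) / 2 / P = (x + y) / 2 by field_simp,
    mul_div_cancel_left₀ _ hP.ne', mul_div_cancel_left₀ _ hP.ne']
  have h1 := mul_le_mul_of_nonneg_left (aux_mid α f hf x y hx hy)
    (mul_nonneg (inv_pos.2 hη).le hP.le)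
  have h2 : 0 ≤ P * (η / α) * ((r - g + b) - α / (2 * η) * (x - y)) ^ 2 := by positivity
  have h3 : P * (η / α) * ((r - g + b) - α / (2 * η) * (x - y)) ^ 2
      = η / α * (P * (r - g + b) ^ 2) - P * (x - y) * (r - g + b)
        + η⁻¹ * P * (α / 4 * (x - y) ^ 2) := by
    field_simp
    ring
  rw [h3] at h2
  linarith

/-- Bias-invariant, coverage-free suboptimality bound for `f`-divergence
regularization with `α`-strongly convex `f`: if `π*` and `π̂` maximize the
regularized objective for rewards `r` and `g` respectively, then for any
per-state bias `b`, `J_r(π*) − J_r(π̂) ≤ (η/α)·E_{ρ × π_ref}[(r − g + b)²]`. -/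
theorem stmt18 {S A : Type*} [Fintype S] [Fintype A] [Nonempty S] [Nonempty A]
    (ρ : S → ℝ) (hρ0 : ∀ s, 0 ≤ ρ s) (hρ1 : ∑ s, ρ s = 1)
    (πref : S → A → ℝ) (hpos : ∀ s a, 0 < πref s a) (hsum : ∀ s, ∑ a, πref s a = 1)
    (η : ℝ) (hη : 0 < η) (α : ℝ) (hα : 0 < α)
    (f : ℝ → ℝ) (hf : ConvexOn ℝ (Set.Ici (0 : ℝ)) (fun x => f x - α / 2 * x ^ 2))
    (r g : S → A → ℝ) (b : S → ℝ) (πstar πhat : S → A → ℝ)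
    (hπstar0 : ∀ s a, 0 ≤ πstar s a) (hπstar1 : ∀ s, ∑ a, πstar s a = 1)
    (hπhat0 : ∀ s a, 0 ≤ πhat s a) (hπhat1 : ∀ s, ∑ a, πhat s a = 1)
    (hstar : ∀ s, ∀ π : A → ℝ, (∀ a, 0 ≤ π a) → (∑ a, π a = 1) →
      (∑ a, π a * r s a) - η⁻¹ * ∑ a, πref s a * f (π a / πref s a) ≤
        (∑ a, πstar s a * r s a) - η⁻¹ * ∑ a, πref s a * f (πstar s a / πref s a))
    (hhat : ∀ s, ∀ π : A → ℝ, (∀ a, 0 ≤ π a) → (∑ a, π a = 1) →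
      (∑ a, π a * g s a) - η⁻¹ * ∑ a, πref s a * f (π a / πref s a) ≤
        (∑ a, πhat s a * g s a) - η⁻¹ * ∑ a, πref s a * f (πhat s a / πref s a)) :
    Jf ρ πref f η r πstar - Jf ρ πref f η r πhat ≤
      η / α * ∑ s, ∑ a, ρ s * πref s a * (r s a - g s a + b s) ^ 2 := by
  unfold Jf
  rw [← Finset.sum_sub_distrib, Finset.mul_sum]
  refine Finset.sum_le_sum fun s _ => ?_
  have hm := hhat s (fun a => (πstar s a + πhat s a) / 2)
    (fun a => by have := hπstar0 s a; have := hπhat0 s a; positivity)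
    (by rw [← Finset.sum_div, Finset.sum_add_distrib, hπstar1, hπhat1]; norm_num)
  have key := Finset.sum_le_sum fun a (_ : a ∈ Finset.univ) =>
    aux_pt α η hα hη f hf (πref s a) (πstar s a) (πhat s a) (r s a) (g s a) (b s)
      (hpos s a) (hπstar0 s a) (hπhat0 s a)
  simp only [Finset.sum_sub_distrib, Finset.sum_add_distrib, ← Finset.mul_sum,
    hπstar1, hπhat1] at key
  have e : η / α * ∑ a, ρ s * πref s a * (r s a - g s a + b s) ^ 2
      = ρ s * (η / α * ∑ a, πref s a * (r s a - g s a + b s) ^ 2) := by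
    simp only [Finset.mul_sum]
    exact Finset.sum_congr rfl fun a _ => by ring
  rw [e, ← mul_sub]
  refine mul_le_mul_of_nonneg_left ?_ (hρ0 s)
  linarith
end
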